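/- The function j is strictly monotonically decreasing on (0,1) with j(y) → 1 as y → 0⁺ and j(y) → 0 as y → 1⁻, and the function k is strictly monotonically increasing on (0,1) with k(y) → 0 as y → 0⁺ and k(y) → 1 as y → 1⁻. -/

import Mathlib

noncomputable def gFun (y : ℝ) : ℝ := y / Real.log (1 - y)

noncomputable def hFun (y : ℝ) : ℝ := (1 - y) / Real.log y

/-- Wronskian of `g` and `h`. -/
noncomputable def WFun (y : ℝ) : ℝ := gFun y * deriv hFun y - deriv gFun y * hFun y

noncomputable def jFun (y : ℝ) : ℝ := -deriv hFun y / WFun y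

noncomputable def kFun (y : ℝ) : ℝ := deriv gFun y / WFun y

/-!
The pair `(j y, k y)` is polar dual to the curve `(g, h)`: it is the line `j * g + k * h = -1`
tangent to the curve at `y`. Both `g` and `h` are strictly convex and `j`, `k` are positive, so
`j y * g + k y * h` attains its minimum `-1` only at `y`. For `x < y`, comparing the support lines
at `x` and `y` on both points of the curve bounds the increments of `j` and `k` in two directions.
Since the curve lies in the negative quadrant, with `g` increasing and `h` decreasing, this forces
the increment of `j` to be negative and that of `k` to be positive.

As `g y = h (1 - y)`, the reflection `y ↦ 1 - y` exchanges `j` and `k`, so only the limits at `0`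
are needed. There `k ≤ g' / (g * h') → 0` because `h' → -∞`, and then `j = (-1 - k * h) / g → 1`.
-/

open Set Filter Topology

section SupportLines

theorem add_mul_sub_lt_of_strictConvexOn {s : Set ℝ} {f : ℝ → ℝ} {f' x y : ℝ}
    (hf : StrictConvexOn ℝ s f) (hx : x ∈ s) (hy : y ∈ s) (hxy : x ≠ y)
    (hf' : HasDerivAt f f' y) : f y + f' * (x - y) < f x := by
  rcases hxy.lt_or_gt with hlt | hgt
  · have hslope := hf.slope_lt_of_hasDerivAt hx hy hlt hf'
    rw [slope_def_field, div_lt_iff₀ (sub_pos.2 hlt)] at hslope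
    linarith
  · have hslope := hf.lt_slope_of_hasDerivAt hy hx hgt hf'
    rw [slope_def_field, lt_div_iff₀ (sub_pos.2 hgt)] at hslope
    linarith

theorem add_mul_lt_add_mul_of_strictConvexOn {s : Set ℝ} {g h : ℝ → ℝ} {a b g' h' x y : ℝ}
    (hg : StrictConvexOn ℝ s g) (hh : StrictConvexOn ℝ s h) (ha : 0 < a) (hb : 0 < b)
    (hx : x ∈ s) (hy : y ∈ s) (hxy : x ≠ y) (hg' : HasDerivAt g g' y) (hh' : HasDerivAt h h' y)
    (hcrit : a * g' + b * h' = 0) : a * g y + b * h y < a * g x + b * h x := by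
  have hgx := mul_lt_mul_of_pos_left (add_mul_sub_lt_of_strictConvexOn hg hx hy hxy hg') ha
  have hhx := mul_lt_mul_of_pos_left (add_mul_sub_lt_of_strictConvexOn hh hx hy hxy hh') hb
  linear_combination hgx + hhx - (x - y) * hcrit

variable {α R : Type*} [Preorder α] [CommRing R] [LinearOrder R] [IsStrictOrderedRing R]
  {s : Set α} {g h j k : α → R} {c : R}

theorem strictAntiOn_and_strictMonoOn_of_support
    (hg : ∀ x ∈ s, g x < 0) (hh : ∀ x ∈ s, h x < 0)
    (hturn : ∀ x ∈ s, ∀ y ∈ s, x < y → g y * h x < g x * h y)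
    (hline : ∀ x ∈ s, j x * g x + k x * h x = c)
    (hsupport : ∀ x ∈ s, ∀ y ∈ s, x ≠ y → c < j y * g x + k y * h x) :
    StrictAntiOn j s ∧ StrictMonoOn k s := by
  suffices hincr : ∀ x ∈ s, ∀ y ∈ s, x < y → j y < j x ∧ k x < k y from
    ⟨fun x hx y hy hxy => (hincr x hx y hy hxy).1, fun x hx y hy hxy => (hincr x hx y hy hxy).2⟩
  intro x hx y hy hxy
  have hatx : 0 < (j y - j x) * g x + (k y - k x) * h x := by
    linarith [hline x hx, hsupport x hx y hy hxy.ne]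
  have haty : (j y - j x) * g y + (k y - k x) * h y < 0 := by
    linarith [hline y hy, hsupport y hy x hx hxy.ne']
  have hdet : 0 < g x * h y - g y * h x := sub_pos.2 (hturn x hx y hy hxy)
  -- Cramer's rule for the increments
  have hj : (j y - j x) * (g x * h y - g y * h x) < 0 := by
    linarith [mul_neg_of_pos_of_neg hatx (hh y hy), mul_pos_of_neg_of_neg haty (hh x hx)]
  have hk : 0 < (k y - k x) * (g x * h y - g y * h x) := by
    linarith [mul_neg_of_pos_of_neg hatx (hg y hy), mul_pos_of_neg_of_neg haty (hg x hx)]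
  exact ⟨sub_neg.1 (neg_of_mul_neg_left hj hdet.le), sub_pos.1 (pos_of_mul_pos_left hk hdet.le)⟩

end SupportLines

section Reflection

variable {G : Type*} [AddCommGroup G] [PartialOrder G] [IsOrderedAddMonoid G] [TopologicalSpace G]
  [ContinuousSub G]

theorem tendsto_const_sub_nhdsGT (a b : G) : Tendsto (fun y => a - y) (𝓝[>] b) (𝓝[<] (a - b)) :=
  (by fun_prop : Continuous fun y => a - y).continuousWithinAt.tendsto_nhdsWithin
    fun _ hy => sub_lt_sub_left (mem_Ioi.1 hy) a

theorem tendsto_const_sub_nhdsLT (a b : G) : Tendsto (fun y => a - y) (𝓝[<] b) (𝓝[>] (a - b)) :=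
  (by fun_prop : Continuous fun y => a - y).continuousWithinAt.tendsto_nhdsWithin
    fun _ hy => sub_lt_sub_left (mem_Iio.1 hy) a

theorem one_sub_mem_Ioo {y : ℝ} (hy : y ∈ Ioo (0 : ℝ) 1) : 1 - y ∈ Ioo (0 : ℝ) 1 :=
  ⟨sub_pos.2 hy.2, sub_lt_self 1 hy.1⟩

theorem gFun_eq_hFun_one_sub (y : ℝ) : gFun y = hFun (1 - y) := by
  rw [gFun, hFun, sub_sub_cancel]

theorem deriv_gFun (y : ℝ) : deriv gFun y = -deriv hFun (1 - y) := by
  rw [funext gFun_eq_hFun_one_sub, deriv_comp_const_sub]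

theorem WFun_eq (y : ℝ) :
    WFun y = hFun (1 - y) * deriv hFun y + deriv hFun (1 - y) * hFun y := by
  rw [WFun, deriv_gFun, gFun_eq_hFun_one_sub]
  ring

theorem jFun_one_sub (y : ℝ) : jFun (1 - y) = kFun y := by
  rw [jFun, kFun, deriv_gFun, WFun_eq, WFun_eq, sub_sub_cancel]
  ring

theorem kFun_one_sub (y : ℝ) : kFun (1 - y) = jFun y := by
  rw [← jFun_one_sub, sub_sub_cancel]

end Reflection

section Convexity

variable {y : ℝ}

theorem add_one_mul_log_lt_two_mul_sub_one (hy : y ∈ Ioo (0 : ℝ) 1) :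
    (y + 1) * Real.log y < 2 * (y - 1) := by
  have hpos : 0 < y⁻¹ - 1 := sub_pos.2 ((one_lt_inv₀ hy.1).2 hy.2)
  have hlog := Real.lt_log_one_add_of_pos hpos
  have hy₀ : 0 < y := hy.1
  rw [add_sub_cancel, Real.log_inv, div_lt_iff₀ (by linarith)] at hlog
  linear_combination y * hlog - (2 + Real.log y) * mul_inv_cancel₀ hy₀.ne'

theorem hasDerivAt_hFun (hy₀ : 0 < y) (hy₁ : y ≠ 1) :
    HasDerivAt hFun ((1 - y⁻¹ - Real.log y) / Real.log y ^ 2) y := by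
  have hlog : Real.log y ≠ 0 := Real.log_ne_zero_of_pos_of_ne_one hy₀ hy₁
  refine (((hasDerivAt_id y).const_sub 1).div (Real.hasDerivAt_log hy₀.ne') hlog).congr_deriv ?_
  simp only [id]
  field_simp
  ring

theorem deriv_hFun (hy₀ : 0 < y) (hy₁ : y ≠ 1) :
    deriv hFun y = (1 - y⁻¹ - Real.log y) / Real.log y ^ 2 :=
  (hasDerivAt_hFun hy₀ hy₁).deriv

theorem hasDerivAt_deriv_hFun (hy₀ : 0 < y) (hy₁ : y ≠ 1) :
    HasDerivAt (deriv hFun)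
      (((y + 1) * Real.log y - 2 * (y - 1)) / (y ^ 2 * Real.log y ^ 3)) y := by
  have hlog : Real.log y ≠ 0 := Real.log_ne_zero_of_pos_of_ne_one hy₀ hy₁
  have hder : deriv hFun =ᶠ[𝓝 y] fun z => (1 - z⁻¹ - Real.log z) / Real.log z ^ 2 := by
    filter_upwards [lt_mem_nhds hy₀, isOpen_ne.mem_nhds hy₁] with z hz₀ hz₁
    exact deriv_hFun hz₀ hz₁
  refine HasDerivAt.congr_of_eventuallyEq ?_ hder
  have hnum := ((hasDerivAt_inv hy₀.ne').const_sub 1).sub (Real.hasDerivAt_log hy₀.ne')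
  refine (hnum.div ((Real.hasDerivAt_log hy₀.ne').pow 2) (pow_ne_zero 2 hlog)).congr_deriv ?_
  simp only [neg_neg, Pi.pow_apply, Pi.sub_apply, Nat.cast_ofNat, Nat.add_one_sub_one, pow_one]
  field_simp
  ring

theorem hFun_neg (hy : y ∈ Ioo (0 : ℝ) 1) : hFun y < 0 :=
  div_neg_of_pos_of_neg (sub_pos.2 hy.2) (Real.log_neg hy.1 hy.2)

theorem deriv_hFun_neg (hy₀ : 0 < y) (hy₁ : y ≠ 1) : deriv hFun y < 0 := by
  have hlog : Real.log y ≠ 0 := Real.log_ne_zero_of_pos_of_ne_one hy₀ hy₁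
  have hlt := Real.log_lt_sub_one_of_pos (inv_pos.2 hy₀) (inv_ne_one.2 hy₁)
  rw [Real.log_inv] at hlt
  rw [deriv_hFun hy₀ hy₁]
  exact div_neg_of_neg_of_pos (by linarith) (by positivity)

theorem continuousOn_hFun : ContinuousOn hFun (Ioo 0 1) := fun _ hy =>
  (hasDerivAt_hFun hy.1 hy.2.ne).continuousAt.continuousWithinAt

theorem strictAntiOn_hFun : StrictAntiOn hFun (Ioo 0 1) :=
  strictAntiOn_of_deriv_neg (convex_Ioo 0 1) continuousOn_hFun fun y hy => by
    rw [interior_Ioo] at hy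
    exact deriv_hFun_neg hy.1 hy.2.ne

theorem strictMonoOn_deriv_hFun : StrictMonoOn (deriv hFun) (Ioo 0 1) := by
  refine strictMonoOn_of_deriv_pos (convex_Ioo 0 1) (fun y hy =>
    (hasDerivAt_deriv_hFun hy.1 hy.2.ne).continuousAt.continuousWithinAt) fun y hy => ?_
  rw [interior_Ioo] at hy
  rw [(hasDerivAt_deriv_hFun hy.1 hy.2.ne).deriv]
  have hden : y ^ 2 * Real.log y ^ 3 < 0 :=
    mul_neg_of_pos_of_neg (pow_pos hy.1 2) (Odd.pow_neg (by decide) (Real.log_neg hy.1 hy.2))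
  exact div_pos_of_neg_of_neg (sub_neg.2 (add_one_mul_log_lt_two_mul_sub_one hy)) hden

theorem strictConvexOn_hFun : StrictConvexOn ℝ (Ioo 0 1) hFun :=
  StrictMonoOn.strictConvexOn_of_deriv (convex_Ioo 0 1) continuousOn_hFun
    (by simpa only [interior_Ioo] using strictMonoOn_deriv_hFun)

theorem gFun_neg (hy : y ∈ Ioo (0 : ℝ) 1) : gFun y < 0 :=
  gFun_eq_hFun_one_sub y ▸ hFun_neg (one_sub_mem_Ioo hy)

theorem deriv_gFun_pos (hy : y ∈ Ioo (0 : ℝ) 1) : 0 < deriv gFun y := by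
  rw [deriv_gFun]
  exact neg_pos.2 (deriv_hFun_neg (one_sub_mem_Ioo hy).1 (one_sub_mem_Ioo hy).2.ne)

theorem strictMonoOn_gFun : StrictMonoOn gFun (Ioo 0 1) := fun x hx y hy hxy => by
  simp only [gFun_eq_hFun_one_sub]
  exact strictAntiOn_hFun (one_sub_mem_Ioo hy) (one_sub_mem_Ioo hx) (sub_lt_sub_left hxy 1)

theorem strictConvexOn_gFun : StrictConvexOn ℝ (Ioo 0 1) gFun := by
  refine StrictMonoOn.strictConvexOn_of_deriv (convex_Ioo 0 1) (fun y hy =>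
    (differentiableAt_of_deriv_ne_zero (deriv_gFun_pos hy).ne').continuousAt.continuousWithinAt) ?_
  rw [interior_Ioo]
  intro x hx y hy hxy
  simp only [deriv_gFun]
  exact neg_lt_neg (strictMonoOn_deriv_hFun (one_sub_mem_Ioo hy) (one_sub_mem_Ioo hx)
    (sub_lt_sub_left hxy 1))

end Convexity

section Monotonicity

variable {x y : ℝ}

theorem gFun_mul_deriv_hFun_pos (hy : y ∈ Ioo (0 : ℝ) 1) : 0 < gFun y * deriv hFun y :=
  mul_pos_of_neg_of_neg (gFun_neg hy) (deriv_hFun_neg hy.1 hy.2.ne)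

theorem gFun_mul_deriv_hFun_lt_WFun (hy : y ∈ Ioo (0 : ℝ) 1) : gFun y * deriv hFun y < WFun y := by
  have := mul_neg_of_pos_of_neg (deriv_gFun_pos hy) (hFun_neg hy)
  rw [WFun]
  linarith

theorem WFun_pos (hy : y ∈ Ioo (0 : ℝ) 1) : 0 < WFun y :=
  (gFun_mul_deriv_hFun_pos hy).trans (gFun_mul_deriv_hFun_lt_WFun hy)

theorem jFun_pos (hy : y ∈ Ioo (0 : ℝ) 1) : 0 < jFun y :=
  div_pos (neg_pos.2 (deriv_hFun_neg hy.1 hy.2.ne)) (WFun_pos hy)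

theorem kFun_pos (hy : y ∈ Ioo (0 : ℝ) 1) : 0 < kFun y :=
  div_pos (deriv_gFun_pos hy) (WFun_pos hy)

theorem jFun_mul_gFun_add_kFun_mul_hFun (hy : y ∈ Ioo (0 : ℝ) 1) :
    jFun y * gFun y + kFun y * hFun y = -1 := by
  have hW := (WFun_pos hy).ne'
  rw [jFun, kFun]
  field_simp
  rw [WFun]
  ring

theorem jFun_mul_deriv_gFun_add_kFun_mul_deriv_hFun (y : ℝ) :
    jFun y * deriv gFun y + kFun y * deriv hFun y = 0 := by
  rw [jFun, kFun]
  ring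

theorem neg_one_lt_jFun_mul_gFun_add_kFun_mul_hFun (hx : x ∈ Ioo (0 : ℝ) 1)
    (hy : y ∈ Ioo (0 : ℝ) 1) (hxy : x ≠ y) : -1 < jFun y * gFun x + kFun y * hFun x := by
  rw [← jFun_mul_gFun_add_kFun_mul_hFun hy]
  exact add_mul_lt_add_mul_of_strictConvexOn strictConvexOn_gFun strictConvexOn_hFun
    (jFun_pos hy) (kFun_pos hy) hx hy hxy
    (differentiableAt_of_deriv_ne_zero (deriv_gFun_pos hy).ne').hasDerivAt
    (differentiableAt_of_deriv_ne_zero (deriv_hFun_neg hy.1 hy.2.ne).ne).hasDerivAt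
    (jFun_mul_deriv_gFun_add_kFun_mul_deriv_hFun y)

theorem gFun_mul_hFun_lt_gFun_mul_hFun (hx : x ∈ Ioo (0 : ℝ) 1) (hy : y ∈ Ioo (0 : ℝ) 1)
    (hxy : x < y) : gFun y * hFun x < gFun x * hFun y := by
  rw [← neg_mul_neg (gFun y), ← neg_mul_neg (gFun x)]
  exact mul_lt_mul'' (neg_lt_neg (strictMonoOn_gFun hx hy hxy))
    (neg_lt_neg (strictAntiOn_hFun hx hy hxy)) (neg_pos.2 (gFun_neg hy)).le
    (neg_pos.2 (hFun_neg hx)).le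

theorem strictAntiOn_jFun_and_strictMonoOn_kFun :
    StrictAntiOn jFun (Ioo 0 1) ∧ StrictMonoOn kFun (Ioo 0 1) :=
  strictAntiOn_and_strictMonoOn_of_support (fun _ => gFun_neg) (fun _ => hFun_neg)
    (fun _ hx _ hy => gFun_mul_hFun_lt_gFun_mul_hFun hx hy)
    (fun _ => jFun_mul_gFun_add_kFun_mul_hFun)
    (fun _ hx _ hy => neg_one_lt_jFun_mul_gFun_add_kFun_mul_hFun hx hy)

end Monotonicity

section Limits

theorem tendsto_hFun_nhdsGT_zero : Tendsto hFun (𝓝[>] 0) (𝓝 0) := by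
  have hnum : Tendsto (fun y : ℝ => 1 - y) (𝓝[>] 0) (𝓝 (1 - 0)) :=
    (tendsto_const_sub_nhdsGT 1 0).mono_right nhdsWithin_le_nhds
  exact hnum.div_atBot Real.tendsto_log_nhdsGT_zero

theorem tendsto_hFun_nhdsNE_one : Tendsto hFun (𝓝[≠] 1) (𝓝 (-1)) := by
  have hslope : Tendsto (slope Real.log 1) (𝓝[≠] 1) (𝓝 1) := by
    simpa only [inv_one] using (Real.hasDerivAt_log one_ne_zero).tendsto_slope
  have hinv : Tendsto (fun y => -(slope Real.log 1 y)⁻¹) (𝓝[≠] 1) (𝓝 (-1)) := by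
    simpa only [inv_one] using (hslope.inv₀ one_ne_zero).neg
  refine hinv.congr fun y => ?_
  rw [slope_def_field, Real.log_one, sub_zero, inv_div, ← neg_div, neg_sub, hFun]

theorem tendsto_gFun_nhdsGT_zero : Tendsto gFun (𝓝[>] 0) (𝓝 (-1)) := by
  have hrefl := tendsto_const_sub_nhdsGT (1 : ℝ) 0
  rw [sub_zero] at hrefl
  rw [funext gFun_eq_hFun_one_sub]
  exact (tendsto_hFun_nhdsNE_one.mono_left (nhdsLT_le_nhdsNE 1)).comp hrefl

/- With `t = -log y` the derivative is `-(exp t - 1 - t) / t ^ 2`, and the cubic Taylor polynomial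
bounds `exp t` from below. -/
theorem deriv_hFun_le_log_div_six {y : ℝ} (hy : y ∈ Ioo (0 : ℝ) 1) :
    deriv hFun y ≤ Real.log y / 6 := by
  have hlog : Real.log y < 0 := Real.log_neg hy.1 hy.2
  have htaylor := Real.sum_le_exp_of_nonneg (neg_pos.2 hlog).le 4
  rw [Real.exp_neg, Real.exp_log hy.1] at htaylor
  norm_num [Finset.sum_range_succ, Nat.factorial] at htaylor
  rw [deriv_hFun hy.1 hy.2.ne, div_le_iff₀ (sq_pos_of_neg hlog)]
  linarith [sq_nonneg (Real.log y)]

theorem tendsto_deriv_hFun_nhdsGT_zero : Tendsto (deriv hFun) (𝓝[>] 0) atBot := by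
  refine tendsto_atBot_mono' _ ?_
    (Real.tendsto_log_nhdsGT_zero.atBot_div_const (by norm_num : (0 : ℝ) < 6))
  filter_upwards [Ioo_mem_nhdsGT one_pos] with y hy using deriv_hFun_le_log_div_six hy

theorem deriv_gFun_le_of_le_half {y : ℝ} (hy₀ : 0 < y) (hy : y ≤ 1 / 2) :
    deriv gFun y ≤ -deriv hFun (1 / 2) := by
  rw [deriv_gFun]
  exact neg_le_neg (strictMonoOn_deriv_hFun.monotoneOn ⟨by norm_num, by norm_num⟩
    ⟨by linarith, by linarith⟩ (by linarith))

theorem tendsto_kFun_nhdsGT_zero : Tendsto kFun (𝓝[>] 0) (𝓝 0) := by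
  have hdenom : Tendsto (fun y => gFun y * deriv hFun y) (𝓝[>] 0) atTop :=
    tendsto_gFun_nhdsGT_zero.neg_mul_atBot neg_one_lt_zero tendsto_deriv_hFun_nhdsGT_zero
  refine squeeze_zero' ?_ ?_ (hdenom.const_div_atTop (-deriv hFun (1 / 2)))
  · filter_upwards [Ioo_mem_nhdsGT one_pos] with y hy using (kFun_pos hy).le
  · filter_upwards [Ioo_mem_nhdsGT one_pos, Ioo_mem_nhdsGT one_half_pos] with y hy hhalf
    have hg' := deriv_gFun_le_of_le_half hy.1 hhalf.2.le
    exact div_le_div₀ ((deriv_gFun_pos hy).le.trans hg') hg' (gFun_mul_deriv_hFun_pos hy)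
      (gFun_mul_deriv_hFun_lt_WFun hy).le

theorem tendsto_jFun_nhdsGT_zero : Tendsto jFun (𝓝[>] 0) (𝓝 1) := by
  have hlim : Tendsto (fun y => (-1 - kFun y * hFun y) / gFun y) (𝓝[>] 0) (𝓝 1) := by
    simpa [Pi.div_def] using
      ((tendsto_kFun_nhdsGT_zero.mul tendsto_hFun_nhdsGT_zero).const_sub (-1)).div
        tendsto_gFun_nhdsGT_zero (neg_ne_zero.2 one_ne_zero)
  refine hlim.congr' ?_
  filter_upwards [Ioo_mem_nhdsGT one_pos] with y hy
  rw [div_eq_iff (gFun_neg hy).ne, ← jFun_mul_gFun_add_kFun_mul_hFun hy, add_sub_cancel_right]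

end Limits

/-- `j` strictly decreases on `(0,1)` from `1` (at `0⁺`) to `0` (at `1⁻`), and
`k` strictly increases on `(0,1)` from `0` (at `0⁺`) to `1` (at `1⁻`). -/
theorem stmt_11 :
    StrictAntiOn jFun (Set.Ioo (0 : ℝ) 1) ∧
    Filter.Tendsto jFun (nhdsWithin 0 (Set.Ioi 0)) (nhds 1) ∧
    Filter.Tendsto jFun (nhdsWithin 1 (Set.Iio 1)) (nhds 0) ∧
    StrictMonoOn kFun (Set.Ioo (0 : ℝ) 1) ∧
    Filter.Tendsto kFun (nhdsWithin 0 (Set.Ioi 0)) (nhds 0) ∧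
    Filter.Tendsto kFun (nhdsWithin 1 (Set.Iio 1)) (nhds 1) := by
  obtain ⟨hj_anti, hk_mono⟩ := strictAntiOn_jFun_and_strictMonoOn_kFun
  have hrefl : Tendsto (fun y : ℝ => 1 - y) (𝓝[<] 1) (𝓝[>] 0) := by
    simpa only [sub_self] using tendsto_const_sub_nhdsLT (1 : ℝ) 1
  have hj_one : Tendsto jFun (𝓝[<] 1) (𝓝 0) :=
    (tendsto_kFun_nhdsGT_zero.comp hrefl).congr kFun_one_sub
  have hk_one : Tendsto kFun (𝓝[<] 1) (𝓝 1) :=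
    (tendsto_jFun_nhdsGT_zero.comp hrefl).congr jFun_one_sub
  exact ⟨hj_anti, tendsto_jFun_nhdsGT_zero, hj_one, hk_mono, tendsto_kFun_nhdsGT_zero, hk_one⟩
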